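/- arXiv:0901.4827 — 3 statements merged into one kernel-verified Lean document; each statement's English description precedes it below -/
import Mathlib

section
/- Let R be a commutative ring and M a 2×2 matrix over R with det M = 1 and trace t := Tr(M). Then the characteristic polynomial of the Kronecker product M ⊗ M (a 4×4 matrix) equals (X - 1)² · (X² - (t² - 2)·X + 1). -/
open Polynomial Kronecker

/-- The explicit `4 × 4` determinant, for arbitrary determinant `a * d - b * c`. -/
theorem det_kronecker_aux {S : Type*} [CommRing S] (a b c d x : S) :
    Matrix.det !![x - a * a, -(a * b), -(b * a), -(b * b);
      -(a * c), x - a * d, -(b * c), -(b * d);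
      -(c * a), -(c * b), x - d * a, -(d * b);
      -(c * c), -(c * d), -(d * c), x - d * d] =
    (x - (a * d - b * c)) ^ 2 *
      (x ^ 2 - ((a + d) ^ 2 - 2 * (a * d - b * c)) * x + (a * d - b * c) ^ 2) := by
  simp [Matrix.det_succ_row_zero, Fin.sum_univ_succ, Fin.succAbove]
  ring

/-- Characteristic polynomial of the Kronecker square of a `2 × 2` matrix of
determinant `1` and trace `t`. -/
theorem charpoly_kronecker_sl2 (R : Type*) [CommRing R]
    (M : Matrix (Fin 2) (Fin 2) R) (hdet : M.det = 1) :
    (M ⊗ₖ M).charpoly =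
      (X - 1) ^ 2 * (X ^ 2 - C (M.trace ^ 2 - 2) * X + 1) := by
  have hD : (C (M 0 0) * C (M 1 1) - C (M 0 1) * C (M 1 0) : R[X]) = 1 := by
    rw [Matrix.det_fin_two] at hdet
    rw [← C_mul, ← C_mul, ← C_sub, hdet, C_1]
  have key := det_kronecker_aux (C (M 0 0)) (C (M 0 1)) (C (M 1 0)) (C (M 1 1)) (X : R[X])
  rw [hD] at key
  have hM : (M ⊗ₖ M).charpoly = (X - 1) ^ 2 *
      (X ^ 2 - ((C (M 0 0) + C (M 1 1)) ^ 2 - 2 * 1) * X + 1 ^ 2) := by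
    rw [Matrix.charpoly, ← Matrix.det_reindex_self (finProdFinEquiv (m := 2) (n := 2))]
    refine Eq.trans (congrArg Matrix.det ?_) key
    ext1 i j
    obtain ⟨⟨i1, i2⟩, rfl⟩ := (finProdFinEquiv (m := 2) (n := 2)).surjective i
    obtain ⟨⟨j1, j2⟩, rfl⟩ := (finProdFinEquiv (m := 2) (n := 2)).surjective j
    rw [Matrix.reindex_apply, Matrix.submatrix_apply, Equiv.symm_apply_apply,
      Equiv.symm_apply_apply]
    fin_cases i1 <;> fin_cases i2 <;> fin_cases j1 <;> fin_cases j2 <;>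
      simp [Matrix.charmatrix_apply, finProdFinEquiv, Matrix.diagonal_apply]
  rw [hM, Matrix.trace_fin_two]
  have h2 : (C 2 : R[X]) = 2 := map_ofNat C 2
  simp [h2]
end

section
/- Consider the integer quadratic form q(x,y) = 4x² + 16xy + 4y² (the quadratic form of the rank-2 even lattice with Gram matrix [[4,8],[8,4]]). Then: (i) for all integers x, y with (x,y) ≠ (0,0), q(x,y) ≠ 0; and (ii) for all integers x, y, q(x,y) ≠ -2. -/
/-- The quadratic form `4x² + 16xy + 4y²` of the lattice with Gram matrix
`[[4,8],[8,4]]` represents neither `0` (nontrivially) nor `-2`. -/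
theorem lattice_represents_neither_zero_nor_neg_two :
    (∀ x y : ℤ, (x, y) ≠ (0, 0) → 4 * x ^ 2 + 16 * x * y + 4 * y ^ 2 ≠ 0) ∧
      (∀ x y : ℤ, 4 * x ^ 2 + 16 * x * y + 4 * y ^ 2 ≠ -2) := by
  refine ⟨fun x y hxy h => ?_, fun x y h => ?_⟩
  · haveI : Zsqrtd.Nonsquare 3 := ⟨fun n hn => by
      have : n < 2 := by nlinarith
      interval_cases n <;> omega⟩
    have h3 : (x + 2 * y) * (x + 2 * y) = ((3 : ℕ) : ℤ) * y * y := by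
      push_cast
      linarith [h]
    obtain ⟨h1, h2⟩ := Zsqrtd.divides_sq_eq_zero_z h3
    apply hxy
    ext <;> simp <;> omega
  · have : 4 * (x ^ 2 + 4 * (x * y) + y ^ 2) = -2 := by linarith
    omega
end

section
/- Let A = [[45,10,16],[-36,-7,-12],[-8,-2,-3]] regarded as a 3×3 real matrix. Then the set of real roots of the characteristic polynomial of A is exactly {1, 17 + 12√2, 17 - 12√2}; moreover (17+12√2)·(17-12√2) = 1 and 17 + 12√2 > 1 > 17 - 12√2 > 0. -/
open Matrix Polynomial

/-- The real eigenvalues of `A = M₁M₂` are exactly `1`, `17 + 12√2` and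
`17 - 12√2`, the latter two being inverse to each other. -/
theorem beauville_product_real_eigenvalues
    (A : Matrix (Fin 3) (Fin 3) ℝ)
    (hA : A = !![45, 10, 16; -36, -7, -12; -8, -2, -3]) :
    {x : ℝ | A.charpoly.IsRoot x} =
        {1, 17 + 12 * Real.sqrt 2, 17 - 12 * Real.sqrt 2} ∧
      (17 + 12 * Real.sqrt 2) * (17 - 12 * Real.sqrt 2) = 1 ∧
      1 < 17 + 12 * Real.sqrt 2 ∧
      17 - 12 * Real.sqrt 2 < 1 ∧ 0 < 17 - 12 * Real.sqrt 2 := by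
  have h2 : Real.sqrt 2 * Real.sqrt 2 = 2 := Real.mul_self_sqrt (by norm_num)
  have h0 : 0 ≤ Real.sqrt 2 := Real.sqrt_nonneg 2
  have hlo : 4 / 3 < Real.sqrt 2 := by nlinarith
  have hhi : Real.sqrt 2 < 17 / 12 := by nlinarith
  refine ⟨?_, by nlinarith, by linarith, by linarith, by linarith⟩
  have key : ∀ x : ℝ, A.charpoly.eval x =
      (x - 1) * ((x - (17 + 12 * Real.sqrt 2)) * (x - (17 - 12 * Real.sqrt 2))) := by
    intro x
    rw [Matrix.eval_charpoly, hA, Matrix.det_fin_three]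
    simp [Matrix.scalar_apply]
    linear_combination (144 * (x - 1)) * h2
  ext x
  simp only [Set.mem_setOf_eq, Polynomial.IsRoot.def, key, mul_eq_zero, sub_eq_zero,
    Set.mem_insert_iff, Set.mem_singleton_iff]
end
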